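/- (Exact logarithmic limit of the Gagliardo-type energy of the optimal profile on a cube) Let N ≥ 2, let α < β be real numbers and let R > 0. Set Q := Q_R'(0) × (−R/2, R/2) ⊂ ℝ^N and, for ε ∈ (0,1), define u_ε: Q → ℝ by u_ε(y) := β if y_N < −ε/(2|ln ε|), u_ε(y) := β + (α − β)(|ln ε|/ε)(y_N + ε/(2|ln ε|)) if |y_N| ≤ ε/(2|ln ε|), and u_ε(y) := α if y_N > ε/(2|ln ε|). Then lim_{ε→0⁺} (1/|ln ε|) ∫_Q ∫_Q (u_ε(y) − u_ε(x))²/|y − x|^{N+1} dy dx = k R^{N−1}, where k := 2(β − α)² ω_{N−1} and ω_{N−1} is the Lebesgue measure of the unit ball in ℝ^{N−1}. -/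

import Mathlib

open MeasureTheory Filter Set
open scoped ENNReal Topology

noncomputable section

/-!
The energy depends on the profile only through the vertical coordinate, so the horizontal variables
can be integrated out. Write `N = d + 1`, split a point of `ℝ^N` into its height and its horizontal
part in `ℝ^d`, and put `h = t - s` for the difference of two heights. The function
`r ↦ (r / √(r² + h²))^d / (d h²)` is a primitive of the radial density
`r^(d-1) / (r² + h²)^((d+2)/2)`, whence, with `ω` the volume of the unit ball of `ℝ^d`,
`∫_{|z| < η} dz / (|z|² + h²)^((d+2)/2) = (ω / h²) (η / √(η² + h²))^d` (`lintegral_ball_kernel`).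

Since the last factor is at most `1`, the energy is at most `ω R^d` times the one-dimensional energy
`∫∫ (v(t) - v(s))² / (t - s)² dt ds` on `(-R/2, R/2)²`, where `v` is the one-variable profile
(`energy_le`). Conversely, if the horizontal part of `x` is at distance at least `τ` from the
boundary of the cube and both heights lie in `(-a, a)`, the factor is at least
`(τ / √(τ² + 4a²))^d`, which gives a lower bound with `(R - 2τ)^d` in place of `R^d` (`le_energy`).

With transition half-width `δ`, the one-dimensional energy is `2 (β - α)² log (1 / δ) + O(1)`: the
logarithm comes from the pairs lying on opposite sides of the transition layer, and the pairs with
a point in or close to the layer contribute `O(1)` (`energy1_le`, `le_energy1`).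
For `δ = ε / (2 |log ε|)` one has `log (1 / δ) ~ |log ε|` (`tendsto_log_div`), so the upper bound has
the right limit. In the lower bound take `a = τ²`, let `ε → 0` and then `τ → 0`.

All estimates are made for Lebesgue integrals in `ℝ≥0∞`, which settles integrability; the upper
bound being finite, they transfer to the Bochner integrals (`integral_eq_toReal`).
-/

section Auxiliary

/-! ### The radial kernel -/

lemma lintegral_Ioo_of_hasDerivAt {F f : ℝ → ℝ} {a b : ℝ} (hab : a ≤ b)
    (hF : ∀ x ∈ Icc a b, HasDerivAt F (f x) x) (hf : ContinuousOn f (Icc a b))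
    (h0 : ∀ x ∈ Icc a b, 0 ≤ f x) :
    ∫⁻ x in Ioo a b, ENNReal.ofReal (f x) = ENNReal.ofReal (F b - F a) := by
  have hint : IntervalIntegrable f volume a b :=
    ContinuousOn.intervalIntegrable (by rwa [uIcc_of_le hab])
  rw [← intervalIntegral.integral_eq_sub_of_hasDerivAt (by rwa [uIcc_of_le hab]) hint,
    intervalIntegral.integral_of_le hab, integral_Ioc_eq_integral_Ioo, ofReal_integral_eq_lintegral_ofReal]
  · exact hint.1.mono_set Ioo_subset_Ioc_self
  · filter_upwards [ae_restrict_mem measurableSet_Ioo] with x hx using h0 x (Ioo_subset_Icc_self hx)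

lemma hasDerivAt_radial (d : ℕ) (hd : 1 ≤ d) (h : ℝ) (hh : h ≠ 0) (r : ℝ) :
    HasDerivAt (fun r : ℝ => 1 / (d * h ^ 2) * (r / √(r ^ 2 + h ^ 2)) ^ d)
      (r ^ (d - 1) * (1 / √(r ^ 2 + h ^ 2) ^ (d + 2))) r := by
  have hp : 0 < r ^ 2 + h ^ 2 := by positivity
  have hs : 0 < √(r ^ 2 + h ^ 2) := Real.sqrt_pos.2 hp
  have hsq : √(r ^ 2 + h ^ 2) ^ 2 = r ^ 2 + h ^ 2 := Real.sq_sqrt hp.le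
  have h1 : HasDerivAt (fun r : ℝ => √(r ^ 2 + h ^ 2)) (r / √(r ^ 2 + h ^ 2)) r := by
    have := (((hasDerivAt_id r).pow 2).add_const (h ^ 2)).sqrt hp.ne'
    convert! this using 1
    simp; field_simp
  have h2 := (((hasDerivAt_id r).div h1 hs.ne').pow d).const_mul (1 / (d * h ^ 2))
  convert! h2 using 1
  obtain ⟨e, rfl⟩ : ∃ e, d = e + 1 := ⟨d - 1, by omega⟩
  simp only [id, Nat.add_sub_cancel, Pi.div_apply]
  have hd' : ((e + 1 : ℕ) : ℝ) ≠ 0 := by positivity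
  have hk : (1 * √(r ^ 2 + h ^ 2) - r * (r / √(r ^ 2 + h ^ 2))) / √(r ^ 2 + h ^ 2) ^ 2
      = h ^ 2 / √(r ^ 2 + h ^ 2) ^ 3 := by
    field_simp
    rw [hsq]; ring
  rw [hk, div_pow]
  field_simp
  ring

/-- The exact mass on a ball of the kernel `(|z|² + h²)^(-(d+2)/2)` of `ℝ^d`. -/
lemma lintegral_ball_kernel (d : ℕ) (hd : 1 ≤ d) (h : ℝ) (hh : h ≠ 0) (η : ℝ) (hη : 0 < η) :
    ∫⁻ z in Metric.ball (0 : EuclideanSpace ℝ (Fin d)) η,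
        ENNReal.ofReal (1 / √(‖z‖ ^ 2 + h ^ 2) ^ (d + 2)) =
      ENNReal.ofReal (volume.real (Metric.ball (0 : EuclideanSpace ℝ (Fin d)) 1) *
        (η / √(η ^ 2 + h ^ 2)) ^ d / h ^ 2) := by
  have : Nonempty (Fin d) := ⟨⟨0, hd⟩⟩
  set g : ℝ → ℝ := fun r => 1 / √(r ^ 2 + h ^ 2) ^ (d + 2) with hg
  have hpos : ∀ r : ℝ, 0 < √(r ^ 2 + h ^ 2) := fun r => Real.sqrt_pos.2 (by positivity)
  have hgc : Continuous g := by
    refine Continuous.div continuous_const (by fun_prop) fun r => (pow_pos (hpos r) _).ne'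
  rw [← ofReal_integral_eq_lintegral_ofReal]
  · congr 1
    have e1 : ∫ z in Metric.ball (0 : EuclideanSpace ℝ (Fin d)) η, g ‖z‖ =
        ∫ z : EuclideanSpace ℝ (Fin d), (Iio η).indicator g ‖z‖ := by
      rw [← integral_indicator Metric.isOpen_ball.measurableSet]
      congr 1; ext z
      simp [indicator]
    have e2 : ∫ y in Ioi (0:ℝ), y ^ (d - 1) • (Iio η).indicator g y
        = ∫ y in Ioo (0:ℝ) η, y ^ (d - 1) * g y := by
      have : ∀ y, y ^ (d - 1) • (Iio η).indicator g y =
          (Iio η).indicator (fun y => y ^ (d - 1) * g y) y := by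
        intro y; by_cases hy : y < η <;> simp [indicator, hy]
      simp_rw [this]
      rw [setIntegral_indicator measurableSet_Iio, Ioi_inter_Iio]
    change ∫ z in Metric.ball (0 : EuclideanSpace ℝ (Fin d)) η, g ‖z‖ = _
    rw [e1, integral_fun_norm_addHaar, finrank_euclideanSpace_fin, e2,
      ← integral_Ioc_eq_integral_Ioo, ← intervalIntegral.integral_of_le hη.le,
      intervalIntegral.integral_eq_sub_of_hasDerivAt (fun x _ => hasDerivAt_radial d hd h hh x)]
    · have hd' : (d : ℝ) ≠ 0 := by positivity
      simp [show d ≠ 0 by omega]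
      field_simp
    · exact ((continuous_pow _).mul hgc).intervalIntegrable _ _
  · exact ((hgc.comp continuous_norm).continuousOn.integrableOn_compact
      (isCompact_closedBall 0 η)).mono_set Metric.ball_subset_closedBall
  · exact ae_of_all _ fun z => by positivity

/-! ### Splitting off the last coordinate -/

variable {d : ℕ}

/-- The horizontal part `x' ∈ ℝ^d` of a point `x = (x', x_{d+1})` of `ℝ^(d+1)`. -/
def hor {d : ℕ} (x : EuclideanSpace ℝ (Fin (d + 1))) : EuclideanSpace ℝ (Fin d) :=
  WithLp.toLp 2 fun j => x j.castSucc

/-- The closed cube `[-r, r]^d`, of side `2 * r`. -/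
def cube (d : ℕ) (r : ℝ) : Set (EuclideanSpace ℝ (Fin d)) := {z | ∀ j, |z j| ≤ r}

lemma cube_eq (d : ℕ) (r : ℝ) :
    cube d r = (WithLp.ofLp) ⁻¹' (Set.Icc (fun _ : Fin d => -r) (fun _ => r)) := by
  ext z; simp [cube, abs_le, Pi.le_def, forall_and]

lemma measurableSet_cube (d : ℕ) (r : ℝ) : MeasurableSet (cube d r) := by
  rw [cube_eq]
  exact (PiLp.volume_preserving_ofLp (Fin d)).measurable measurableSet_Icc

lemma volume_cube (d : ℕ) (r : ℝ) (hr : 0 ≤ r) :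
    volume (cube d r) = ENNReal.ofReal ((2 * r) ^ d) := by
  rw [cube_eq, (PiLp.volume_preserving_ofLp (Fin d)).measure_preimage
    measurableSet_Icc.nullMeasurableSet, Real.volume_Icc_pi]
  simp only [Finset.prod_const, Finset.card_univ, Fintype.card_fin]
  rw [ENNReal.ofReal_pow (by linarith)]
  congr 2; ring

lemma measurePreserving_split (d : ℕ) :
    MeasurePreserving (fun x : EuclideanSpace ℝ (Fin (d + 1)) => (x (Fin.last d), hor x)) := by
  have h1 := PiLp.volume_preserving_ofLp (Fin (d + 1))
  have h2 := volume_preserving_piFinSuccAbove (fun _ : Fin (d + 1) => ℝ) (Fin.last d)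
  have h3 : MeasurePreserving (Prod.map id (WithLp.toLp 2) : ℝ × (Fin d → ℝ) → ℝ × EuclideanSpace ℝ (Fin d)) :=
    (MeasurePreserving.id volume).prod (PiLp.volume_preserving_toLp (Fin d))
  have := h3.comp (h2.comp h1)
  convert! this using 1
  ext x j
  · simp [MeasurableEquiv.piFinSuccAbove]
  · simp [MeasurableEquiv.piFinSuccAbove, hor, Fin.init]

lemma norm_sub_split (x y : EuclideanSpace ℝ (Fin (d + 1))) :
    ‖y - x‖ = √(‖hor y - hor x‖ ^ 2 + (y (Fin.last d) - x (Fin.last d)) ^ 2) := by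
  rw [EuclideanSpace.norm_eq, EuclideanSpace.norm_sq_eq, Fin.sum_univ_castSucc]
  simp [hor]

lemma lintegral_split (J : Set ℝ) (hJ : MeasurableSet J) (A : Set (EuclideanSpace ℝ (Fin d)))
    (hA : MeasurableSet A) (f : ℝ × EuclideanSpace ℝ (Fin d) → ℝ≥0∞) (hf : Measurable f) :
    ∫⁻ x in {x : EuclideanSpace ℝ (Fin (d + 1)) | x (Fin.last d) ∈ J ∧ hor x ∈ A},
        f (x (Fin.last d), hor x) = ∫⁻ s in J, ∫⁻ z in A, f (s, z) := by
  have h := (measurePreserving_split d).restrict_preimage (hJ.prod hA)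
  have h2 := h.lintegral_comp hf
  rw [Measure.volume_eq_prod, ← Measure.prod_restrict, lintegral_prod _ hf.aemeasurable] at h2
  exact h2

/-! ### The one-dimensional energy -/

/-- The one-variable transition profile: `β` below `-δ`, `α` above `δ`, affine in between. -/
def prof (α β δ t : ℝ) : ℝ :=
  if t < -δ then β else if δ < t then α else β + (α - β) * (1 / (2 * δ)) * (t + δ)

lemma measurable_prof (α β δ : ℝ) : Measurable (prof α β δ) := by
  unfold prof
  refine Measurable.ite measurableSet_Iio measurable_const
    (Measurable.ite measurableSet_Ioi measurable_const (by fun_prop))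

lemma prof_eq_clamp (α β δ t : ℝ) (hδ : 0 < δ) :
    prof α β δ t = β - (β - α) * max 0 (min 1 ((t + δ) / (2 * δ))) := by
  unfold prof
  split_ifs with h1 h2
  · have : (t + δ) / (2 * δ) ≤ 0 := div_nonpos_of_nonpos_of_nonneg (by linarith) (by linarith)
    rw [min_eq_right (by linarith), max_eq_left this]; ring
  · have : 1 ≤ (t + δ) / (2 * δ) := by rw [le_div_iff₀ (by linarith)]; linarith
    rw [min_eq_left this, max_eq_right zero_le_one]; ring
  · have h3 : (t + δ) / (2 * δ) ≤ 1 := by rw [div_le_iff₀ (by linarith)]; linarith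
    have h4 : 0 ≤ (t + δ) / (2 * δ) := div_nonneg (by linarith) (by linarith)
    rw [min_eq_right h3, max_eq_right h4]; ring

lemma prof_sq_le (α β δ s t : ℝ) (hδ : 0 < δ) :
    (prof α β δ t - prof α β δ s) ^ 2 ≤ (β - α) ^ 2 := by
  rw [prof_eq_clamp _ _ _ _ hδ, prof_eq_clamp _ _ _ _ hδ]
  have h : ∀ x : ℝ, 0 ≤ max 0 (min 1 x) ∧ max 0 (min 1 x) ≤ 1 := fun x =>
    ⟨le_max_left _ _, max_le zero_le_one (min_le_left _ _)⟩
  obtain ⟨h1, h2⟩ := h ((t + δ) / (2 * δ))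
  obtain ⟨h3, h4⟩ := h ((s + δ) / (2 * δ))
  generalize max 0 (min 1 ((t + δ) / (2 * δ))) = p at *
  generalize max 0 (min 1 ((s + δ) / (2 * δ))) = q at *
  have : (β - (β - α) * p - (β - (β - α) * q)) ^ 2 = (β - α) ^ 2 * (q - p) ^ 2 := by ring
  rw [this]
  exact mul_le_of_le_one_right (sq_nonneg _)
    ((sq_le_one_iff_abs_le_one _).2 (abs_le.2 ⟨by linarith, by linarith⟩))

lemma prof_sq_le' (α β δ s t : ℝ) (hδ : 0 < δ) :
    (prof α β δ t - prof α β δ s) ^ 2 ≤ (β - α) ^ 2 / (2 * δ) ^ 2 * (t - s) ^ 2 := by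
  rw [prof_eq_clamp _ _ _ _ hδ, prof_eq_clamp _ _ _ _ hδ]
  have h : ∀ x y : ℝ, |max 0 (min 1 x) - max 0 (min 1 y)| ≤ |x - y| := fun x y =>
    by
    rw [max_comm 0, max_comm 0, min_comm 1, min_comm 1]
    have := abs_min_sub_min_le_max x 1 y 1
    rw [sub_self, abs_zero, max_eq_left (abs_nonneg _)] at this
    exact (abs_max_sub_max_le_abs _ _ _).trans this
  have h1 := sq_le_sq.2 (h ((t + δ) / (2 * δ)) ((s + δ) / (2 * δ)))
  have : (β - (β - α) * max 0 (min 1 ((t + δ) / (2 * δ))) -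
      (β - (β - α) * max 0 (min 1 ((s + δ) / (2 * δ))))) ^ 2 = (β - α) ^ 2 *
      (max 0 (min 1 ((t + δ) / (2 * δ))) - max 0 (min 1 ((s + δ) / (2 * δ)))) ^ 2 := by ring
  rw [this]
  refine (mul_le_mul_of_nonneg_left h1 (sq_nonneg _)).trans (le_of_eq ?_)
  field_simp
  ring

lemma prof_of_lt_neg {α β δ t : ℝ} (h : t < -δ) : prof α β δ t = β := by simp [prof, h]

lemma prof_of_lt {α β δ t : ℝ} (hδ : 0 < δ) (h : δ < t) : prof α β δ t = α := by
  simp [prof, h, show ¬ t < -δ by linarith]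

lemma lintegral_inv_sq (c s p q : ℝ) (hc : 0 ≤ c) (hpq : p ≤ q) (hs : s < p ∨ q < s) :
    ∫⁻ t in Ioo p q, ENNReal.ofReal (c / (t - s) ^ 2) =
      ENNReal.ofReal (c / (p - s) - c / (q - s)) := by
  have hne : ∀ t ∈ Icc p q, t - s ≠ 0 := by
    rintro t ⟨h1, h2⟩ h
    rcases hs with hs | hs <;> linarith
  rw [lintegral_Ioo_of_hasDerivAt (F := fun t => - (c / (t - s))) hpq]
  · congr 1; ring
  · intro t ht
    have := (((hasDerivAt_id t).sub_const s).inv (hne t ht)).const_mul (-c)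
    convert! this using 1
    · ext t; simp [div_eq_mul_inv]
    · simp [div_eq_mul_inv]
  · exact ContinuousOn.div continuousOn_const (by fun_prop) fun t ht => pow_ne_zero _ (hne t ht)
  · intro t ht; positivity

/-- Bound used when `s` is in or close to the transition layer: the profile is Lipschitz with
constant `(β - α) / (2δ)`, which is used for `|t - s| ≤ 2δ`, and its oscillation is at most `β - α`,
which is used for all other `t`. -/
lemma inner_le (α β δ a s : ℝ) (hδ : 0 < δ) (hs : s ∈ Ioo (-a) a) :
    ∫⁻ t in Ioo (-a) a, ENNReal.ofReal ((prof α β δ t - prof α β δ s) ^ 2 / (t - s) ^ 2) ≤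
      ENNReal.ofReal (2 * (β - α) ^ 2 / δ) := by
  obtain ⟨hs1, hs2⟩ := hs
  set f : ℝ → ℝ≥0∞ := fun t =>
    ENNReal.ofReal ((prof α β δ t - prof α β δ s) ^ 2 / (t - s) ^ 2) with hf
  set M := 2 * a + 2 * δ with hM
  have hsub : Ioo (-a) a ⊆ Ioo (s - M) (s - 2 * δ) ∪
      (Icc (s - 2 * δ) (s + 2 * δ) ∪ Ioo (s + 2 * δ) (s + M)) := by
    rintro t ⟨h1, h2⟩
    simp only [mem_union, mem_Ioo, mem_Icc]
    by_cases h3 : t < s - 2 * δ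
    · left; constructor <;> linarith
    · right
      by_cases h4 : t ≤ s + 2 * δ
      · left; constructor <;> linarith
      · right; constructor <;> linarith
  have hfar : ∀ t, f t ≤ ENNReal.ofReal ((β - α) ^ 2 / (t - s) ^ 2) := fun t =>
    ENNReal.ofReal_le_ofReal (div_le_div_of_nonneg_right (prof_sq_le α β δ s t hδ) (sq_nonneg _))
  have hnear : ∀ t, f t ≤ ENNReal.ofReal ((β - α) ^ 2 / (2 * δ) ^ 2) := fun t =>
    ENNReal.ofReal_le_ofReal (div_le_of_le_mul₀ (sq_nonneg _) (by positivity)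
      (prof_sq_le' α β δ s t hδ))
  have hM0 : 0 < M := by simp only [hM]; linarith
  have e1 : ∫⁻ t in Ioo (s - M) (s - 2 * δ), f t ≤ ENNReal.ofReal ((β - α) ^ 2 / (2 * δ)) := by
    refine (lintegral_mono fun t => hfar t).trans ?_
    rw [lintegral_inv_sq _ _ _ _ (sq_nonneg _) (by simp only [hM]; linarith) (by right; linarith)]
    refine ENNReal.ofReal_le_ofReal ?_
    have : 0 ≤ (β - α) ^ 2 / M := by positivity
    rw [show s - M - s = - M by ring, show s - 2 * δ - s = -(2 * δ) by ring, div_neg, div_neg]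
    linarith
  have e2 : ∫⁻ t in Ioo (s + 2 * δ) (s + M), f t ≤ ENNReal.ofReal ((β - α) ^ 2 / (2 * δ)) := by
    refine (lintegral_mono fun t => hfar t).trans ?_
    rw [lintegral_inv_sq _ _ _ _ (sq_nonneg _) (by simp only [hM]; linarith) (by left; linarith)]
    refine ENNReal.ofReal_le_ofReal ?_
    have : 0 ≤ (β - α) ^ 2 / M := by positivity
    rw [add_sub_cancel_left, add_sub_cancel_left]
    linarith
  have e3 : ∫⁻ t in Icc (s - 2 * δ) (s + 2 * δ), f t ≤ ENNReal.ofReal ((β - α) ^ 2 / δ) := by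
    refine (lintegral_mono fun t => hnear t).trans ?_
    rw [setLIntegral_const, Real.volume_Icc, ← ENNReal.ofReal_mul (by positivity)]
    refine ENNReal.ofReal_le_ofReal (le_of_eq ?_)
    field_simp; ring
  calc ∫⁻ t in Ioo (-a) a, f t
      ≤ _ := lintegral_mono_set hsub
    _ ≤ _ := lintegral_union_le _ _ _
    _ ≤ _ := add_le_add e1 ((lintegral_union_le _ _ _).trans (add_le_add e3 e2))
    _ = _ := by
      rw [← ENNReal.ofReal_add (by positivity) (by positivity),
        ← ENNReal.ofReal_add (by positivity) (by positivity)]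
      congr 1; field_simp; ring

/-- Above the layer only the `t ≤ δ` contribute. -/
lemma inner_le_pos (α β δ a s : ℝ) (hδ : 0 < δ) (hs1 : δ < s) (hs2 : s < a) :
    ∫⁻ t in Ioo (-a) a, ENNReal.ofReal ((prof α β δ t - prof α β δ s) ^ 2 / (t - s) ^ 2) ≤
      ENNReal.ofReal ((β - α) ^ 2 / (s - δ)) := by
  set f : ℝ → ℝ≥0∞ := fun t =>
    ENNReal.ofReal ((prof α β δ t - prof α β δ s) ^ 2 / (t - s) ^ 2) with hf
  have hsub : Ioo (-a) a ⊆ Ioc (-a) δ ∪ Ioi δ := by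
    rintro t ⟨h1, h2⟩
    rcases le_or_gt t δ with h | h
    · exact Or.inl ⟨h1, h⟩
    · exact Or.inr h
  have e2 : ∫⁻ t in Ioi δ, f t = 0 := by
    rw [setLIntegral_congr_fun measurableSet_Ioi (g := fun _ => 0), lintegral_zero]
    intro t ht
    simp [hf, prof_of_lt hδ ht, prof_of_lt hδ hs1]
  have e1 : ∫⁻ t in Ioc (-a) δ, f t ≤ ENNReal.ofReal ((β - α) ^ 2 / (s - δ)) := by
    rw [setLIntegral_congr Ioo_ae_eq_Ioc.symm]
    refine (lintegral_mono fun t => ENNReal.ofReal_le_ofReal (div_le_div_of_nonneg_right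
      (prof_sq_le α β δ s t hδ) (sq_nonneg _))).trans ?_
    rw [lintegral_inv_sq _ _ _ _ (sq_nonneg _) (by linarith) (by right; linarith)]
    refine ENNReal.ofReal_le_ofReal ?_
    have : 0 ≤ (β - α) ^ 2 / (a + s) := div_nonneg (sq_nonneg _) (by linarith)
    rw [show -a - s = -(a + s) by ring, show δ - s = -(s - δ) by ring, div_neg, div_neg]
    linarith
  calc _ ≤ _ := lintegral_mono_set hsub
    _ ≤ _ := lintegral_union_le _ _ _
    _ ≤ _ := by rw [e2, add_zero]; exact e1

/-- Below the layer only the `t ≥ -δ` contribute. -/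
lemma inner_le_neg (α β δ a s : ℝ) (hδ : 0 < δ) (hs1 : -a < s) (hs2 : s < -δ) :
    ∫⁻ t in Ioo (-a) a, ENNReal.ofReal ((prof α β δ t - prof α β δ s) ^ 2 / (t - s) ^ 2) ≤
      ENNReal.ofReal ((β - α) ^ 2 / (-s - δ)) := by
  set f : ℝ → ℝ≥0∞ := fun t =>
    ENNReal.ofReal ((prof α β δ t - prof α β δ s) ^ 2 / (t - s) ^ 2) with hf
  have hsub : Ioo (-a) a ⊆ Iio (-δ) ∪ Ico (-δ) a := by
    rintro t ⟨h1, h2⟩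
    rcases lt_or_ge t (-δ) with h | h
    · exact Or.inl h
    · exact Or.inr ⟨h, h2⟩
  have e2 : ∫⁻ t in Iio (-δ), f t = 0 := by
    rw [setLIntegral_congr_fun measurableSet_Iio (g := fun _ => 0), lintegral_zero]
    intro t ht
    simp [hf, prof_of_lt_neg ht, prof_of_lt_neg hs2]
  have e1 : ∫⁻ t in Ico (-δ) a, f t ≤ ENNReal.ofReal ((β - α) ^ 2 / (-s - δ)) := by
    rw [setLIntegral_congr Ioo_ae_eq_Ico.symm]
    refine (lintegral_mono fun t => ENNReal.ofReal_le_ofReal (div_le_div_of_nonneg_right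
      (prof_sq_le α β δ s t hδ) (sq_nonneg _))).trans ?_
    rw [lintegral_inv_sq _ _ _ _ (sq_nonneg _) (by linarith) (by left; linarith)]
    refine ENNReal.ofReal_le_ofReal ?_
    have : 0 ≤ (β - α) ^ 2 / (a - s) := div_nonneg (sq_nonneg _) (by linarith)
    rw [show -s - δ = -δ - s by ring]
    linarith
  calc _ ≤ _ := lintegral_mono_set hsub
    _ ≤ _ := lintegral_union_le _ _ _
    _ ≤ _ := by rw [e2, zero_add]; exact e1

/-- Upper bound for the one-dimensional energy: the `s` with `|s| ≤ 3δ` contribute `O(1)`, and each of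
the two sides `|s| > 3δ` contributes at most `(β - α)² log (a / (2δ))`. -/
lemma energy1_le (α β δ a : ℝ) (hδ : 0 < δ) (ha : 3 * δ < a) :
    ∫⁻ s in Ioo (-a) a, ∫⁻ t in Ioo (-a) a,
      ENNReal.ofReal ((prof α β δ t - prof α β δ s) ^ 2 / (t - s) ^ 2) ≤
    ENNReal.ofReal ((β - α) ^ 2 * (12 + 2 * Real.log (a / (2 * δ)))) := by
  set g : ℝ → ℝ≥0∞ := fun s => ∫⁻ t in Ioo (-a) a,
      ENNReal.ofReal ((prof α β δ t - prof α β δ s) ^ 2 / (t - s) ^ 2) with hg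
  have hsub : Ioo (-a) a ⊆ Ioo (-a) (-(3 * δ)) ∪
      (Icc (-(3 * δ)) (3 * δ) ∪ Ioo (3 * δ) a) := by
    rintro t ⟨h1, h2⟩
    simp only [mem_union, mem_Ioo, mem_Icc]
    by_cases h3 : t < -(3 * δ)
    · left; constructor <;> linarith
    · right
      by_cases h4 : t ≤ 3 * δ
      · left; constructor <;> linarith
      · right; constructor <;> linarith
  have hlog : Real.log (a - δ) - Real.log (2 * δ) ≤ Real.log (a / (2 * δ)) := by
    rw [Real.log_div (by linarith) (by linarith)]
    have := Real.log_le_log (show 0 < a - δ by linarith) (show a - δ ≤ a by linarith)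
    linarith
  have hlog0 : 0 ≤ Real.log (a / (2 * δ)) :=
    Real.log_nonneg (by rw [le_div_iff₀ (by linarith)]; linarith)
  have e1 : ∫⁻ s in Ioo (-a) (-(3 * δ)), g s ≤
      ENNReal.ofReal ((β - α) ^ 2 * Real.log (a / (2 * δ))) := by
    refine (setLIntegral_mono' measurableSet_Ioo (g := fun s =>
      ENNReal.ofReal ((β - α) ^ 2 / (-s - δ))) fun s hs =>
        inner_le_neg α β δ a s hδ hs.1 (by linarith [hs.2])).trans ?_
    rw [lintegral_Ioo_of_hasDerivAt (F := fun s => -((β - α) ^ 2 * Real.log (-s - δ)))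
      (by linarith)]
    · refine ENNReal.ofReal_le_ofReal ?_
      rw [show - -(3 * δ) - δ = 2 * δ by ring, neg_neg]
      nlinarith [sq_nonneg (β - α), mul_le_mul_of_nonneg_left hlog (sq_nonneg (β - α))]
    · intro s hs
      have hne : -s - δ ≠ 0 := by linarith [hs.2]
      have := ((((hasDerivAt_id s).neg.sub_const δ).log hne).const_mul ((β - α) ^ 2)).neg
      convert! this using 1
      simp only [id, Pi.neg_apply]; field_simp
    · exact ContinuousOn.div continuousOn_const (by fun_prop) fun s hs => by linarith [hs.2]
    · intro s hs; exact div_nonneg (sq_nonneg _) (by linarith [hs.2])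
  have e2 : ∫⁻ s in Ioo (3 * δ) a, g s ≤
      ENNReal.ofReal ((β - α) ^ 2 * Real.log (a / (2 * δ))) := by
    refine (setLIntegral_mono' measurableSet_Ioo (g := fun s =>
      ENNReal.ofReal ((β - α) ^ 2 / (s - δ))) fun s hs =>
        inner_le_pos α β δ a s hδ (by linarith [hs.1]) hs.2).trans ?_
    rw [lintegral_Ioo_of_hasDerivAt (F := fun s => (β - α) ^ 2 * Real.log (s - δ))
      (by linarith)]
    · refine ENNReal.ofReal_le_ofReal ?_
      rw [show 3 * δ - δ = 2 * δ by ring]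
      nlinarith [sq_nonneg (β - α), mul_le_mul_of_nonneg_left hlog (sq_nonneg (β - α))]
    · intro s hs
      have hne : s - δ ≠ 0 := by linarith [hs.1]
      have := (((hasDerivAt_id s).sub_const δ).log hne).const_mul ((β - α) ^ 2)
      convert! this using 1
      simp only [id]; field_simp
    · exact ContinuousOn.div continuousOn_const (by fun_prop) fun s hs => by linarith [hs.1]
    · intro s hs; exact div_nonneg (sq_nonneg _) (by linarith [hs.1])
  have e3 : ∫⁻ s in Icc (-(3 * δ)) (3 * δ), g s ≤ ENNReal.ofReal ((β - α) ^ 2 * 12) := by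
    refine (setLIntegral_mono' measurableSet_Icc (g := fun s =>
      ENNReal.ofReal (2 * (β - α) ^ 2 / δ)) fun s hs =>
        inner_le α β δ a s hδ ⟨by linarith [hs.1], by linarith [hs.2]⟩).trans ?_
    rw [setLIntegral_const, Real.volume_Icc, ← ENNReal.ofReal_mul (by positivity)]
    refine ENNReal.ofReal_le_ofReal (le_of_eq ?_)
    field_simp; ring
  calc ∫⁻ s in Ioo (-a) a, g s
      ≤ _ := lintegral_mono_set hsub
    _ ≤ _ := lintegral_union_le _ _ _
    _ ≤ _ := add_le_add e1 ((lintegral_union_le _ _ _).trans (add_le_add e3 e2))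
    _ = _ := by
      rw [← ENNReal.ofReal_add (by positivity) (by positivity),
        ← ENNReal.ofReal_add (by positivity) (by positivity)]
      congr 1; ring

/-- Lower bound for the one-dimensional energy, keeping only the pairs on opposite sides of the
transition layer. -/
lemma le_energy1 (α β δ a : ℝ) (hδ : 0 < δ) (ha : δ < a) :
    ENNReal.ofReal ((β - α) ^ 2 * (2 * Real.log (a / (4 * δ)))) ≤
    ∫⁻ s in Ioo (-a) a, ∫⁻ t in Ioo (-a) a,
      ENNReal.ofReal ((prof α β δ t - prof α β δ s) ^ 2 / (t - s) ^ 2) := by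
  set g : ℝ → ℝ≥0∞ := fun s => ∫⁻ t in Ioo (-a) a,
      ENNReal.ofReal ((prof α β δ t - prof α β δ s) ^ 2 / (t - s) ^ 2) with hg
  have hlog : Real.log (a / (4 * δ)) ≤
      Real.log (a + δ) - Real.log (2 * δ) - Real.log (2 * a) + Real.log (a + δ) := by
    rw [Real.log_div (by linarith) (by linarith), show 4 * δ = 2 * (2 * δ) by ring,
      Real.log_mul (by norm_num) (by linarith), Real.log_mul (x := 2) (y := a) (by norm_num)
      (by linarith)]
    have := Real.log_le_log (show 0 < a by linarith) (show a ≤ a + δ by linarith)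
    linarith
  have e1 : ENNReal.ofReal ((β - α) ^ 2 * Real.log (a / (4 * δ))) ≤
      ∫⁻ s in Ioo (-a) (-δ), g s := by
    have hin : ∀ s ∈ Ioo (-a) (-δ),
        ENNReal.ofReal ((β - α) ^ 2 / (δ - s) - (β - α) ^ 2 / (a - s)) ≤ g s := by
      intro s hs
      rw [← lintegral_inv_sq _ _ _ _ (sq_nonneg _) ha.le (by left; linarith [hs.2])]
      refine le_trans (le_of_eq ?_) (lintegral_mono_set (s := Ioo δ a)
        (Ioo_subset_Ioo_left (by linarith)))
      refine setLIntegral_congr_fun measurableSet_Ioo fun t ht => ?_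
      simp only [prof_of_lt hδ ht.1, prof_of_lt_neg hs.2]
      congr 2; ring
    refine le_trans ?_ (setLIntegral_mono' measurableSet_Ioo hin)
    rw [lintegral_Ioo_of_hasDerivAt
      (F := fun s => (β - α) ^ 2 * (Real.log (a - s) - Real.log (δ - s))) (by linarith)]
    · refine ENNReal.ofReal_le_ofReal ?_
      rw [show a - -δ = a + δ by ring, show δ - -δ = 2 * δ by ring, show a - -a = 2 * a by ring,
        show δ - -a = a + δ by ring]
      nlinarith [mul_le_mul_of_nonneg_left hlog (sq_nonneg (β - α))]
    · intro s hs
      have h1 : a - s ≠ 0 := by linarith [hs.2]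
      have h2 : δ - s ≠ 0 := by linarith [hs.2]
      have := ((((hasDerivAt_id s).const_sub a).log h1).sub
        (((hasDerivAt_id s).const_sub δ).log h2)).const_mul ((β - α) ^ 2)
      convert! this using 1
      simp; field_simp; ring
    · refine ContinuousOn.sub (ContinuousOn.div continuousOn_const (by fun_prop) fun s hs => ?_)
        (ContinuousOn.div continuousOn_const (by fun_prop) fun s hs => ?_)
      · linarith [hs.2]
      · linarith [hs.2]
    · intro s hs
      exact sub_nonneg.2 (div_le_div_of_nonneg_left (sq_nonneg _) (by linarith [hs.2])
        (by linarith))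
  have e2 : ENNReal.ofReal ((β - α) ^ 2 * Real.log (a / (4 * δ))) ≤
      ∫⁻ s in Ioo δ a, g s := by
    have hin : ∀ s ∈ Ioo δ a,
        ENNReal.ofReal ((β - α) ^ 2 / (s + δ) - (β - α) ^ 2 / (s + a)) ≤ g s := by
      intro s hs
      have : (β - α) ^ 2 / (s + δ) - (β - α) ^ 2 / (s + a) =
          (β - α) ^ 2 / (-a - s) - (β - α) ^ 2 / (-δ - s) := by
        rw [show -a - s = -(s + a) by ring, show -δ - s = -(s + δ) by ring, div_neg, div_neg]
        ring
      rw [this, ← lintegral_inv_sq _ _ _ _ (sq_nonneg _) (by linarith)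
        (by right; linarith [hs.1])]
      refine le_trans (le_of_eq ?_) (lintegral_mono_set (s := Ioo (-a) (-δ))
        (Ioo_subset_Ioo_right (by linarith)))
      refine setLIntegral_congr_fun measurableSet_Ioo fun t ht => ?_
      simp only [prof_of_lt hδ hs.1, prof_of_lt_neg ht.2]
    refine le_trans ?_ (setLIntegral_mono' measurableSet_Ioo hin)
    rw [lintegral_Ioo_of_hasDerivAt
      (F := fun s => (β - α) ^ 2 * (Real.log (s + δ) - Real.log (s + a))) (by linarith)]
    · refine ENNReal.ofReal_le_ofReal ?_
      rw [show δ + δ = 2 * δ by ring, show a + a = 2 * a by ring, add_comm δ a]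
      nlinarith [mul_le_mul_of_nonneg_left hlog (sq_nonneg (β - α))]
    · intro s hs
      have h1 : s + a ≠ 0 := by linarith [hs.1]
      have h2 : s + δ ≠ 0 := by linarith [hs.1]
      have := ((((hasDerivAt_id s).add_const δ).log h2).sub
        (((hasDerivAt_id s).add_const a).log h1)).const_mul ((β - α) ^ 2)
      convert! this using 1
      simp; field_simp
    · refine ContinuousOn.sub (ContinuousOn.div continuousOn_const (by fun_prop) fun s hs => ?_)
        (ContinuousOn.div continuousOn_const (by fun_prop) fun s hs => ?_)
      · linarith [hs.1]
      · linarith [hs.1]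
    · intro s hs
      exact sub_nonneg.2 (div_le_div_of_nonneg_left (sq_nonneg _) (by linarith [hs.1])
        (by linarith))
  have hdisj : Disjoint (Ioo (-a) (-δ)) (Ioo δ a) :=
    Set.disjoint_left.2 fun t h1 h2 => by linarith [h1.2, h2.1]
  calc _ ≤ ENNReal.ofReal ((β - α) ^ 2 * Real.log (a / (4 * δ))) +
        ENNReal.ofReal ((β - α) ^ 2 * Real.log (a / (4 * δ))) := by
        refine le_trans (le_of_eq ?_) ENNReal.ofReal_add_le
        congr 1; ring
    _ ≤ _ := add_le_add e1 e2
    _ = _ := (lintegral_union measurableSet_Ioo hdisj).symm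
    _ ≤ _ := lintegral_mono_set (union_subset (Ioo_subset_Ioo_right (by linarith))
        (Ioo_subset_Ioo_left (by linarith)))

/-! ### Integrating out the horizontal variables -/

lemma lintegral_ball_kernel_shift (hd : 1 ≤ d) (x : EuclideanSpace ℝ (Fin d)) {h η V : ℝ}
    (hh : h ≠ 0) (hη : 0 < η) (hV : 0 ≤ V) :
    ∫⁻ z in Metric.ball x η, ENNReal.ofReal (V / √(‖z - x‖ ^ 2 + h ^ 2) ^ (d + 2)) =
      ENNReal.ofReal (volume.real (Metric.ball (0 : EuclideanSpace ℝ (Fin d)) 1) *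
        (η / √(η ^ 2 + h ^ 2)) ^ d) * ENNReal.ofReal (V / h ^ 2) := by
  have hmp := (measurePreserving_sub_right (volume : Measure (EuclideanSpace ℝ (Fin d))) x)
  have hpre : (fun z => z - x) ⁻¹' Metric.ball (0 : EuclideanSpace ℝ (Fin d)) η =
      Metric.ball x η := by
    ext z; simp [dist_eq_norm]
  have h2 := (hmp.restrict_preimage (s := Metric.ball 0 η) measurableSet_ball).lintegral_comp
    (f := fun z => ENNReal.ofReal V * ENNReal.ofReal (1 / √(‖z‖ ^ 2 + h ^ 2) ^ (d + 2)))
    (by fun_prop)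
  rw [hpre, lintegral_const_mul' _ (fun z : EuclideanSpace ℝ (Fin d) =>
      ENNReal.ofReal (1 / √(‖z‖ ^ 2 + h ^ 2) ^ (d + 2))) ENNReal.ofReal_ne_top,
    lintegral_ball_kernel d hd h hh η hη,
    ← ENNReal.ofReal_mul hV] at h2
  rw [← ENNReal.ofReal_mul (by positivity)]
  simp_rw [← ENNReal.ofReal_mul hV, mul_one_div] at h2
  rw [h2]
  congr 1
  ring

/-- The box `[-r, r]^d × (-a, a)`; the set `Q` is the case `a = r = R / 2`. -/
def box (d : ℕ) (a r : ℝ) : Set (EuclideanSpace ℝ (Fin (d + 1))) :=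
  {x | x (Fin.last d) ∈ Ioo (-a) a ∧ hor x ∈ cube d r}

/-- The integrand of the energy in `ℝ^N`, `N = d + 1`, for the transition half-width `δ`. -/
def integrand (α β δ : ℝ) (x y : EuclideanSpace ℝ (Fin (d + 1))) : ℝ :=
  (prof α β δ (y (Fin.last d)) - prof α β δ (x (Fin.last d))) ^ 2 / ‖y - x‖ ^ (d + 2)

/-- The integrand of the one-dimensional energy, with values in `ℝ≥0∞`. -/
def quot1 (α β δ s t : ℝ) : ℝ≥0∞ :=
  ENNReal.ofReal ((prof α β δ t - prof α β δ s) ^ 2 / (t - s) ^ 2)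

lemma measurable_energy_inner (α β δ a : ℝ) :
    Measurable fun s => ∫⁻ t in Ioo (-a) a, quot1 α β δ s t := by
  have : Measurable fun p : ℝ × ℝ => quot1 α β δ p.1 p.2 := by
    have h := measurable_prof α β δ
    unfold quot1
    fun_prop
  exact this.lintegral_prod_right'

lemma lintegral_integrand_split (α β δ a r : ℝ) (x : EuclideanSpace ℝ (Fin (d + 1))) :
    ∫⁻ y in box d a r, ENNReal.ofReal (integrand α β δ x y) =
      ∫⁻ t in Ioo (-a) a, ∫⁻ z in cube d r,
        ENNReal.ofReal ((prof α β δ t - prof α β δ (x (Fin.last d))) ^ 2 /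
          √(‖z - hor x‖ ^ 2 + (t - x (Fin.last d)) ^ 2) ^ (d + 2)) := by
  have h := measurable_prof α β δ
  rw [← lintegral_split (Ioo (-a) a) measurableSet_Ioo (cube d r) (measurableSet_cube d r)
    (fun p => ENNReal.ofReal ((prof α β δ p.1 - prof α β δ (x (Fin.last d))) ^ 2 /
          √(‖p.2 - hor x‖ ^ 2 + (p.1 - x (Fin.last d)) ^ 2) ^ (d + 2))) (by fun_prop)]
  simp_rw [integrand, norm_sub_split]
  rfl

/-- Integrating over a ball containing the cube, and bounding the factor
`(ρ / √(ρ² + h²))^d` by `1`, reduces the inner integral to a one-dimensional one. -/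
lemma lintegral_integrand_le (hd : 1 ≤ d) (α β δ a r : ℝ)
    (x : EuclideanSpace ℝ (Fin (d + 1))) :
    ∫⁻ y in box d a r, ENNReal.ofReal (integrand α β δ x y) ≤
      ENNReal.ofReal (volume.real (Metric.ball (0 : EuclideanSpace ℝ (Fin d)) 1)) *
        ∫⁻ t in Ioo (-a) a, quot1 α β δ (x (Fin.last d)) t := by
  rw [lintegral_integrand_split, ← lintegral_const_mul' _ _ ENNReal.ofReal_ne_top]
  refine lintegral_mono fun t => ?_
  -- On the null set `t = s` the kernel is infinite, but both integrands vanish.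
  by_cases ht : t = x (Fin.last d)
  · simp [ht]
  obtain ⟨ρ, hρ0, hρ⟩ : ∃ ρ, 0 < ρ ∧ cube d r ⊆ Metric.ball (hor x) ρ := by
    have hb : Bornology.IsBounded (cube d r) := by
      rw [cube_eq]
      exact (PiLp.antilipschitzWith_ofLp 2 (fun _ : Fin d => ℝ)).isBounded_preimage
        (Metric.isBounded_Icc _ _)
    obtain ⟨ρ, hρ⟩ := hb.subset_ball (hor x)
    exact ⟨max ρ 1, by positivity, hρ.trans (Metric.ball_subset_ball (le_max_left _ _))⟩
  refine (lintegral_mono_set hρ).trans ?_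
  rw [lintegral_ball_kernel_shift hd (hor x) (sub_ne_zero.2 ht) hρ0 (sq_nonneg _)]
  refine mul_le_mul_left ?_ _
  refine ENNReal.ofReal_le_ofReal (mul_le_of_le_one_right measureReal_nonneg ?_)
  refine pow_le_one₀ (by positivity) (div_le_one_of_le₀ ?_ (Real.sqrt_nonneg _))
  exact Real.le_sqrt_of_sq_le (by nlinarith [sq_nonneg (t - x (Fin.last d))])

lemma energy_le (hd : 1 ≤ d) (α β δ r : ℝ) (hδ : 0 < δ) (hr : 3 * δ < r) :
    ∫⁻ x in box d r r, ∫⁻ y in box d r r, ENNReal.ofReal (integrand α β δ x y) ≤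
      ENNReal.ofReal (volume.real (Metric.ball (0 : EuclideanSpace ℝ (Fin d)) 1) *
        (2 * r) ^ d * ((β - α) ^ 2 * (12 + 2 * Real.log (r / (2 * δ))))) := by
  refine (lintegral_mono fun x => lintegral_integrand_le hd α β δ r r x).trans ?_
  have hm := measurable_energy_inner α β δ r
  rw [box, lintegral_split (Ioo (-r) r) measurableSet_Ioo (cube d r) (measurableSet_cube d r)
    (fun p => ENNReal.ofReal (volume.real (Metric.ball (0 : EuclideanSpace ℝ (Fin d)) 1)) *
        ∫⁻ t in Ioo (-r) r, quot1 α β δ p.1 t) ((hm.comp measurable_fst).const_mul _)]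
  simp only [lintegral_const, Measure.restrict_apply_univ, volume_cube d r (by linarith)]
  rw [lintegral_mul_const _ (by fun_prop), lintegral_const_mul _ (by fun_prop),
    mul_right_comm (ENNReal.ofReal _), ← ENNReal.ofReal_mul (by positivity)]
  rw [ENNReal.ofReal_mul (q := (β - α) ^ 2 * _)
    (mul_nonneg measureReal_nonneg (pow_nonneg (by linarith) _))]
  exact mul_le_mul_right (energy1_le α β δ r hδ hr) _

/-- For `x` at horizontal distance at least `τ` from the boundary of the cube, the horizontal
integral may be restricted to the ball of radius `τ` around `x'`. -/
lemma le_lintegral_integrand (hd : 1 ≤ d) (α β δ a r τ : ℝ) (hτ : 0 < τ) (har : a ≤ r)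
    (x : EuclideanSpace ℝ (Fin (d + 1))) (hx : x ∈ box d a (r - τ)) :
    ENNReal.ofReal (volume.real (Metric.ball (0 : EuclideanSpace ℝ (Fin d)) 1) *
        (τ / √(τ ^ 2 + (2 * a) ^ 2)) ^ d) *
        ∫⁻ t in Ioo (-a) a, quot1 α β δ (x (Fin.last d)) t ≤
    ∫⁻ y in box d r r, ENNReal.ofReal (integrand α β δ x y) := by
  rw [lintegral_integrand_split, ← lintegral_const_mul' _ _ ENNReal.ofReal_ne_top]
  refine le_trans ?_ (lintegral_mono_set (Ioo_subset_Ioo (neg_le_neg har) har))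
  refine setLIntegral_mono' measurableSet_Ioo fun t ht => ?_
  by_cases hts : t = x (Fin.last d)
  · simp [hts, quot1]
  have hsub : Metric.ball (hor x) τ ⊆ cube d r := by
    intro z hz j
    have h1 : |z j - hor x j| ≤ ‖z - hor x‖ := by
      simpa using PiLp.norm_apply_le (z - hor x) j
    have h2 : ‖z - hor x‖ < τ := by simpa [dist_eq_norm] using hz
    have h3 := hx.2 j
    have h4 := abs_add_le (z j - hor x j) (hor x j)
    rw [sub_add_cancel] at h4
    linarith
  refine le_trans ?_ (lintegral_mono_set hsub)
  rw [lintegral_ball_kernel_shift hd (hor x) (sub_ne_zero.2 hts) hτ (sq_nonneg _)]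
  refine mul_le_mul_left (ENNReal.ofReal_le_ofReal ?_) _
  have hsq : (t - x (Fin.last d)) ^ 2 ≤ (2 * a) ^ 2 := by
    have := hx.1
    exact sq_le_sq' (by linarith [ht.1, this.2]) (by linarith [ht.2, this.1])
  have : 0 < τ ^ 2 + (t - x (Fin.last d)) ^ 2 := by positivity
  gcongr

lemma le_energy (hd : 1 ≤ d) (α β δ a r τ : ℝ) (hδ : 0 < δ) (ha : δ < a) (har : a ≤ r)
    (hτ : 0 < τ) (hτr : τ ≤ r) :
    ENNReal.ofReal (volume.real (Metric.ball (0 : EuclideanSpace ℝ (Fin d)) 1) *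
        (τ / √(τ ^ 2 + (2 * a) ^ 2)) ^ d * (2 * (r - τ)) ^ d *
        ((β - α) ^ 2 * (2 * Real.log (a / (4 * δ))))) ≤
    ∫⁻ x in box d r r, ∫⁻ y in box d r r, ENNReal.ofReal (integrand α β δ x y) := by
  have hm := measurable_energy_inner α β δ a
  have hsub : box d a (r - τ) ⊆ box d r r := fun x hx =>
    ⟨Ioo_subset_Ioo (by linarith) har hx.1, fun j => (hx.2 j).trans (by linarith)⟩
  have hmeas : MeasurableSet (box d a (r - τ)) :=
    (measurePreserving_split d).measurable
      (measurableSet_Ioo.prod (measurableSet_cube d (r - τ)))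
  refine le_trans ?_ (lintegral_mono_set hsub)
  refine le_trans ?_ (setLIntegral_mono' hmeas fun x hx =>
    le_lintegral_integrand hd α β δ a r τ hτ har x hx)
  rw [box, lintegral_split (Ioo (-a) a) measurableSet_Ioo (cube d (r - τ)) (measurableSet_cube d _)
    (fun p => ENNReal.ofReal (volume.real (Metric.ball (0 : EuclideanSpace ℝ (Fin d)) 1) *
        (τ / √(τ ^ 2 + (2 * a) ^ 2)) ^ d) *
        ∫⁻ t in Ioo (-a) a, quot1 α β δ p.1 t) ((hm.comp measurable_fst).const_mul _)]
  simp only [lintegral_const, Measure.restrict_apply_univ, volume_cube d (r - τ) (by linarith)]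
  rw [lintegral_mul_const _ (by fun_prop), lintegral_const_mul _ (by fun_prop),
    mul_right_comm (ENNReal.ofReal _), ← ENNReal.ofReal_mul (by positivity)]
  rw [ENNReal.ofReal_mul (q := (β - α) ^ 2 * _)
    (mul_nonneg (by positivity) (pow_nonneg (by linarith) _))]
  exact mul_le_mul_right (le_energy1 α β δ a hδ ha) _

lemma measurable_integrand (α β δ : ℝ) :
    Measurable fun p : EuclideanSpace ℝ (Fin (d + 1)) × EuclideanSpace ℝ (Fin (d + 1)) =>
      integrand α β δ p.1 p.2 := by
  have h := measurable_prof α β δ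
  unfold integrand
  fun_prop

lemma integral_eq_toReal (α β δ r : ℝ)
    (hfin : ∫⁻ x in box d r r, ∫⁻ y in box d r r, ENNReal.ofReal (integrand α β δ x y) ≠ ⊤) :
    ∫ x in box d r r, ∫ y in box d r r, integrand α β δ x y =
      (∫⁻ x in box d r r, ∫⁻ y in box d r r, ENNReal.ofReal (integrand α β δ x y)).toReal := by
  have hm := measurable_integrand (d := d) α β δ
  have hm2 : Measurable fun x : EuclideanSpace ℝ (Fin (d + 1)) =>
      ∫⁻ y in box d r r, ENNReal.ofReal (integrand α β δ x y) :=
    hm.ennreal_ofReal.lintegral_prod_right'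
  rw [← integral_toReal hm2.aemeasurable (ae_lt_top hm2 hfin)]
  congr 1; ext x
  refine integral_eq_lintegral_of_nonneg_ae (ae_of_all _ fun y => ?_) ?_
  · exact div_nonneg (sq_nonneg _) (by positivity)
  · exact (hm.comp measurable_prodMk_left).aestronglyMeasurable

/-! ### The limit -/

lemma tendsto_abs_log : Tendsto (fun ε : ℝ => |Real.log ε|) (𝓝[>] 0) atTop :=
  tendsto_abs_atBot_atTop.comp Real.tendsto_log_nhdsGT_zero

lemma tendsto_half_width :
    Tendsto (fun ε : ℝ => ε / (2 * |Real.log ε|)) (𝓝[>] 0) (𝓝 0) :=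
  (tendsto_nhdsWithin_of_tendsto_nhds tendsto_id).div_atTop
    (tendsto_abs_log.const_mul_atTop two_pos)

lemma tendsto_log_div {c : ℝ} (hc : 0 < c) :
    Tendsto (fun ε : ℝ => Real.log (c / (ε / (2 * |Real.log ε|))) / |Real.log ε|)
      (𝓝[>] 0) (𝓝 1) := by
  have h1 : Tendsto (fun ℓ : ℝ => Real.log (2 * c) / ℓ + Real.log ℓ / ℓ + 1) atTop (𝓝 1) := by
    have h2 : Tendsto (fun ℓ : ℝ => Real.log ℓ / ℓ) atTop (𝓝 0) :=
      Real.isLittleO_log_id_atTop.tendsto_div_nhds_zero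
    simpa using ((tendsto_const_nhds (x := Real.log (2 * c))).div_atTop tendsto_id).add h2
      |>.add_const 1
  refine (h1.comp tendsto_abs_log).congr' ?_
  filter_upwards [Ioo_mem_nhdsGT (show (0 : ℝ) < 1 by norm_num)] with ε hε
  have hlog : Real.log ε < 0 := Real.log_neg hε.1 hε.2
  have hℓ : 0 < |Real.log ε| := abs_pos.2 hlog.ne
  have e : c / (ε / (2 * |Real.log ε|)) = 2 * c * |Real.log ε| / ε := by
    have := hε.1; field_simp
  simp only [Function.comp]
  rw [e, Real.log_div (by positivity) hε.1.ne', Real.log_mul (by positivity) hℓ.ne',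
    show Real.log ε = -|Real.log ε| by rw [abs_of_neg hlog]; ring]
  simp only [abs_neg, abs_abs]
  field_simp
  ring

lemma tendsto_rescaled (A B : ℝ) {c : ℝ} (hc : 0 < c) :
    Tendsto (fun ε : ℝ => 1 / |Real.log ε| *
      (A * (B + 2 * Real.log (c / (ε / (2 * |Real.log ε|)))))) (𝓝[>] 0) (𝓝 (2 * A)) := by
  have h1 := ((tendsto_const_nhds (x := A * B)).div_atTop tendsto_abs_log).add
    ((tendsto_log_div hc).const_mul (2 * A))
  simp only [zero_add, mul_one] at h1
  refine h1.congr fun ε => ?_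
  ring

/-- With `a = τ²`, the constant of the lower bound tends to that of the upper bound as `τ → 0⁺`. -/
lemma tendsto_lower_coeff (d : ℕ) (r K : ℝ) :
    Tendsto (fun τ : ℝ => 2 * (K * (τ / √(τ ^ 2 + (2 * τ ^ 2) ^ 2)) ^ d * (2 * (r - τ)) ^ d))
      (𝓝[>] 0) (𝓝 (2 * (K * (2 * r) ^ d))) := by
  have hc : Continuous fun τ : ℝ => 2 * (K * (1 / √(1 + 4 * τ ^ 2)) ^ d * (2 * (r - τ)) ^ d) := by
    have : ∀ τ : ℝ, √(1 + 4 * τ ^ 2) ≠ 0 := fun τ => (Real.sqrt_pos.2 (by positivity)).ne'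
    fun_prop (disch := assumption)
  have h := hc.tendsto 0
  norm_num at h
  refine (tendsto_nhdsWithin_of_tendsto_nhds h).congr' ?_
  filter_upwards [self_mem_nhdsWithin] with τ hτ
  have hτ : 0 < τ := hτ
  have : √(τ ^ 2 + (2 * τ ^ 2) ^ 2) = τ * √(1 + 4 * τ ^ 2) := by
    rw [show τ ^ 2 + (2 * τ ^ 2) ^ 2 = τ ^ 2 * (1 + 4 * τ ^ 2) by ring,
      Real.sqrt_mul (sq_nonneg _), Real.sqrt_sq hτ.le]
  rw [this, div_mul_cancel_left₀ hτ.ne', inv_pow]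

/-- The limit of the rescaled energy on `[-r, r]^d × (-r, r)`. -/
theorem tendsto_energy {d : ℕ} (hd : 1 ≤ d) (α β r : ℝ) (hr : 0 < r) :
    Tendsto (fun ε : ℝ => (1 / |Real.log ε|) * ∫ x in box d r r, ∫ y in box d r r,
      integrand α β (ε / (2 * |Real.log ε|)) x y) (𝓝[>] 0)
      (𝓝 (2 * (volume.real (Metric.ball (0 : EuclideanSpace ℝ (Fin d)) 1) * (β - α) ^ 2 *
        (2 * r) ^ d))) := by
  set ω := volume.real (Metric.ball (0 : EuclideanSpace ℝ (Fin d)) 1) with hω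
  have hω0 : 0 ≤ ω := measureReal_nonneg
  have hsmall : ∀ c : ℝ, 0 < c → ∀ᶠ ε : ℝ in 𝓝[>] 0,
      0 < ε / (2 * |Real.log ε|) ∧ ε / (2 * |Real.log ε|) < c := by
    intro c hc
    filter_upwards [Ioo_mem_nhdsGT (show (0 : ℝ) < 1 by norm_num),
      tendsto_half_width.eventually_lt_const hc] with ε hε h2
    have hℓ : 0 < |Real.log ε| := abs_pos.2 (Real.log_neg hε.1 hε.2).ne
    exact ⟨div_pos hε.1 (by positivity), h2⟩
  refine tendsto_order.2 ⟨fun m hm => ?_, fun m hm => ?_⟩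
  · obtain ⟨τ, hτm, hτ0, hτr, hτr2⟩ : ∃ τ : ℝ, m < 2 * (ω * (β - α) ^ 2 *
        (τ / √(τ ^ 2 + (2 * τ ^ 2) ^ 2)) ^ d * (2 * (r - τ)) ^ d) ∧ 0 < τ ∧ τ < r ∧ τ ^ 2 < r := by
      have h1 := (tendsto_lower_coeff d r (ω * (β - α) ^ 2)).eventually_const_lt hm
      have h2 : ∀ᶠ τ : ℝ in 𝓝[>] 0, τ ^ 2 < r := by
        refine Tendsto.eventually_lt_const hr (tendsto_nhdsWithin_of_tendsto_nhds ?_)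
        simpa using (continuous_pow 2).tendsto (0 : ℝ)
      obtain ⟨τ, ⟨h3, h4⟩, h5⟩ := ((h1.and h2).and (Ioo_mem_nhdsGT hr)).exists
      exact ⟨τ, h3, h5.1, h5.2, h4⟩
    have hτ2 : 0 < τ ^ 2 := by positivity
    have hlim := tendsto_rescaled (ω * (β - α) ^ 2 *
        (τ / √(τ ^ 2 + (2 * τ ^ 2) ^ 2)) ^ d * (2 * (r - τ)) ^ d) 0 (c := τ ^ 2 / 4) (by positivity)
    filter_upwards [hlim.eventually_const_lt hτm, hsmall (r / 3) (by positivity),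
      hsmall (τ ^ 2) hτ2] with ε h1 ⟨hδ, h2⟩ ⟨_, h3⟩
    refine h1.trans_le (mul_le_mul_of_nonneg_left ?_ (by positivity))
    have hup := energy_le hd α β _ r hδ (by linarith)
    have hfin := ne_top_of_le_ne_top ENNReal.ofReal_ne_top hup
    rw [integral_eq_toReal _ _ _ _ hfin, ← ENNReal.ofReal_le_iff_le_toReal hfin]
    refine le_trans (le_of_eq ?_) (le_energy hd α β _ (τ ^ 2) r τ hδ h3 hτr2.le hτ0 hτr.le)
    rw [div_div]
    congr 1; ring
  · have hlim := tendsto_rescaled (ω * (β - α) ^ 2 * (2 * r) ^ d) 12 (c := r / 2) (by positivity)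
    filter_upwards [hlim.eventually_lt_const hm, hsmall (r / 3) (by positivity)]
      with ε h1 ⟨hδ, h2⟩
    refine lt_of_le_of_lt (mul_le_mul_of_nonneg_left ?_ (by positivity)) h1
    have hup := energy_le hd α β _ r hδ (by linarith)
    have hfin := ne_top_of_le_ne_top ENNReal.ofReal_ne_top hup
    rw [integral_eq_toReal _ _ _ _ hfin]
    have hlog : 0 ≤ Real.log (r / (2 * (ε / (2 * |Real.log ε|)))) :=
      Real.log_nonneg (by rw [le_div_iff₀ (by linarith)]; linarith)
    refine (ENNReal.toReal_le_of_le_ofReal (by positivity) hup).trans (le_of_eq ?_)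
    rw [div_div r 2]
    ring

end Auxiliary

/-- Exact logarithmic limit of the Gagliardo-type energy of the optimal profile on a cube:
for the linear-transition profiles `u_ε` on `Q = Q_R'(0) × (-R/2, R/2)`,
`(1/|ln ε|) ∫_Q∫_Q (u_ε(y)-u_ε(x))²/|y-x|^{N+1} dy dx → k R^{N-1}` as `ε → 0⁺`,
where `k = 2(β-α)² ω_{N-1}`. -/
theorem stmt8 (N : ℕ) (hN : 2 ≤ N) (α β : ℝ) (hαβ : α < β) (R : ℝ) (hR : 0 < R)
    (Q : Set (EuclideanSpace ℝ (Fin N)))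
    (hQ : Q = {y | (∀ i : Fin N, (i : ℕ) < N - 1 → |y i| ≤ R / 2) ∧
      y ⟨N - 1, by omega⟩ ∈ Set.Ioo (-(R / 2)) (R / 2)})
    (uε : ℝ → EuclideanSpace ℝ (Fin N) → ℝ)
    (huε : ∀ ε (y : EuclideanSpace ℝ (Fin N)),
      uε ε y = if y ⟨N - 1, by omega⟩ < -(ε / (2 * |Real.log ε|)) then β
        else if ε / (2 * |Real.log ε|) < y ⟨N - 1, by omega⟩ then α
        else β + (α - β) * (|Real.log ε| / ε) *
          (y ⟨N - 1, by omega⟩ + ε / (2 * |Real.log ε|))) :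
    Tendsto
      (fun ε => (1 / |Real.log ε|) *
        ∫ x in Q, ∫ y in Q, (uε ε y - uε ε x) ^ 2 / ‖y - x‖ ^ (N + 1))
      (𝓝[>] (0 : ℝ))
      (𝓝 (2 * (β - α) ^ 2 *
        (volume (Metric.ball (0 : EuclideanSpace ℝ (Fin (N - 1))) 1)).toReal *
        R ^ (N - 1))) := by
  obtain ⟨d, rfl⟩ : ∃ d, N = d + 1 := ⟨N - 1, by omega⟩
  have hQ' : Q = box d (R / 2) (R / 2) := by
    rw [hQ]
    ext y
    simp only [mem_ofPred_eq, box, cube, hor]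
    rw [and_comm]
    refine and_congr Iff.rfl ⟨fun h j => h j.castSucc (by simp), fun h i hi => ?_⟩
    exact h ⟨i, by simpa using hi⟩
  have hu : ∀ ε y, uε ε y = prof α β (ε / (2 * |Real.log ε|)) (y (Fin.last d)) := by
    intro ε y
    have e : |Real.log ε| / ε = 1 / (2 * (ε / (2 * |Real.log ε|))) := by
      rw [← mul_div_assoc, mul_div_mul_left _ _ (two_ne_zero' ℝ), one_div_div]
    rw [huε, e]
    rfl
  have h := tendsto_energy (d := d) (by omega) α β (R / 2) (by positivity)
  convert! h using 2 with ε
  · rw [hQ']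
    simp_rw [hu]
    rfl
  · rw [Nat.add_sub_cancel, mul_div_cancel₀ R two_ne_zero]
    simp only [Measure.real]
    ring
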